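/- Every local dendrite has the local fixed point property (LFPP). -/

import Mathlib

/-- A space has the fixed point property: every continuous self-map has a fixed point. -/
def HasFPP (Y : Type*) [TopologicalSpace Y] : Prop :=
  ∀ f : Y → Y, Continuous f → ∃ x, f x = x

/-- A space has the periodic point property: every continuous self-map has a periodic point. -/
def HasPPP (Y : Type*) [TopologicalSpace Y] : Prop :=
  ∀ f : Y → Y, Continuous f → ∃ x, ∃ n : ℕ, 1 ≤ n ∧ f^[n] x = x

/-- Local fixed point property: there is an open basis whose members have closures with FPP. -/
def HasLFPP (Y : Type*) [TopologicalSpace Y] : Prop :=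
  ∃ 𝓑 : Set (Set Y), TopologicalSpace.IsTopologicalBasis 𝓑 ∧
    ∀ B ∈ 𝓑, HasFPP ↥(closure B)

/-- Weak local fixed point property. -/
def HasWLFPP (Y : Type*) [TopologicalSpace Y] : Prop :=
  ∃ 𝓑 : Set (Set Y), TopologicalSpace.IsTopologicalBasis 𝓑 ∧
    ∀ B ∈ 𝓑, ∀ f : Y → Y, Continuous f → f '' closure B ⊆ B → ∃ x ∈ B, f x = x

/-- Local periodic point property. -/
def HasLPPP (Y : Type*) [TopologicalSpace Y] : Prop :=
  ∃ 𝓑 : Set (Set Y), TopologicalSpace.IsTopologicalBasis 𝓑 ∧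
    ∀ B ∈ 𝓑, HasPPP ↥(closure B)

/-- Weak local periodic point property. -/
def HasWLPPP (Y : Type*) [TopologicalSpace Y] : Prop :=
  ∃ 𝓑 : Set (Set Y), TopologicalSpace.IsTopologicalBasis 𝓑 ∧
    ∀ B ∈ 𝓑, ∀ f : Y → Y, Continuous f → f '' closure B ⊆ B →
      ∃ x ∈ B, ∃ n : ℕ, 1 ≤ n ∧ f^[n] x = x

/-- A subset is a simple closed curve if it is homeomorphic to the unit circle. -/
def IsSimpleClosedCurve {α : Type*} [TopologicalSpace α] (S : Set α) : Prop :=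
  Nonempty (↥S ≃ₜ ↥(Metric.sphere (0 : EuclideanSpace ℝ (Fin 2)) 1))

/-- Covering dimension at most `n`: every finite open cover admits an open shrinking
of order at most `n + 1`. -/
def CoveringDimLE (Y : Type*) [TopologicalSpace Y] (n : ℕ) : Prop :=
  ∀ (ι : Type) [Finite ι] (U : ι → Set Y), (∀ i, IsOpen (U i)) → (⋃ i, U i) = Set.univ →
    ∃ V : ι → Set Y, (∀ i, IsOpen (V i)) ∧ (∀ i, V i ⊆ U i) ∧ (⋃ i, V i) = Set.univ ∧
      ∀ y : Y, {i | y ∈ V i}.ncard ≤ n + 1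

/-- A dendrite: a locally connected (metric) continuum containing no simple closed curve. -/
def IsDendrite {α : Type*} [TopologicalSpace α] (D : Set α) : Prop :=
  IsCompact D ∧ IsConnected D ∧ LocallyConnectedSpace ↥D ∧ ∀ S ⊆ D, ¬ IsSimpleClosedCurve S

/-- A local dendrite: every point has a closed neighborhood which is a dendrite. -/
def IsLocalDendrite (Y : Type*) [TopologicalSpace Y] : Prop :=
  ∀ y : Y, ∃ N : Set Y, N ∈ nhds y ∧ IsClosed N ∧ IsDendrite N

/-!
A complete separable locally connected metric space is locally path connected: embed it
isometrically in a Banach space, join points by paths that run along chains of small connected sets,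
and refine the chains; the limit path lies in the space. A path with distinct ends contains an arc.
Cut loops out of it until the set of remaining parameters is a minimal closed one; then the set of
points already visited grows strictly along the path, and its size under a Whitney map is an
injective parameter.

In a locally connected continuum without simple closed curve, an arc from `x` to `y` lies in every
connected set containing `x` and `y`: if a second arc from `x` to `y` missed one of its points,
parts of the two arcs would form a circle. Given a subcontinuum `K` with a point `p` and a map
`f : K → K`, write `x ≤ y` if `x` lies in every connected set containing `p` and `y`. The set
of all `x ≤ f x` is closed, so it has a maximal element `m`. If `f m ≠ m`, then a point `z` of the
arc from `m` to `f m` close to `m` still satisfies `z ≤ f z`, and `m < z`.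
-/

open Set Filter Function Topology unitInterval

section LocalPathConnectedness

variable {D E : Type*} [MetricSpace D]

lemma exists_isOpen_isPreconnected_subset_ball [LocallyConnectedSpace D] (x : D) {r : ℝ}
    (hr : 0 < r) : ∃ V ⊆ Metric.ball x r, IsOpen V ∧ x ∈ V ∧ IsPreconnected V := by
  obtain ⟨V, hVr, hVo, hxV, hVc⟩ := locallyConnectedSpace_iff_subsets_isOpen_isConnected.1 ‹_› x _
    (Metric.ball_mem_nhds x hr)
  exact ⟨V, hVr, hVo, hxV, hVc.isPreconnected⟩

lemma forall_path_trans_apply {Y : Type*} [TopologicalSpace Y] {a b c : Y} {f : Path a b}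
    {g : Path b c} {P : Y → Prop} (hf : ∀ t, P (f t)) (hg : ∀ t, P (g t)) (t : I) :
    P (f.trans g t) := by
  rw [Path.trans_apply]
  split_ifs
  exacts [hf _, hg _]

variable [NormedAddCommGroup E] {ι : D → E} {r r' : ℝ} {u v : D} {f : Path (ι u) (ι v)}

/-- `IsChainPath ι r f`: seen through the map `ι` of `D` to a normed space, the path `f` runs along
an `r`-chain of `D`. It is a finite concatenation of links, each staying within distance `r` of its
initial point, and the two ends of a link lie in a connected subset of `D` of radius at most `r`. -/
inductive IsChainPath (ι : D → E) (r : ℝ) : ∀ {u v : D}, Path (ι u) (ι v) → Prop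
  | link {u v : D} {W : Set D} {f : Path (ι u) (ι v)} (hW : IsPreconnected W) (hu : u ∈ W)
      (hv : v ∈ W) (hWr : ∀ w ∈ W, dist w u ≤ r) (hf : ∀ t, dist (f t) (ι u) ≤ r) :
      IsChainPath ι r f
  | trans {u v w : D} {f : Path (ι u) (ι v)} {g : Path (ι v) (ι w)} :
      IsChainPath ι r f → IsChainPath ι r g → IsChainPath ι r (f.trans g)

namespace IsChainPath

lemma exists_dist_le (hf : IsChainPath ι r f) : ∀ t, ∃ w, dist (f t) (ι w) ≤ r := by
  induction hf with
  | link _ _ _ _ hf => exact fun t ↦ ⟨_, hf t⟩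
  | trans _ _ ihf ihg =>
    exact forall_path_trans_apply (P := fun y ↦ ∃ w, dist y (ι w) ≤ r) ihf ihg

variable [NormedSpace ℝ E]

lemma exists_link (hι : Isometry ι) {W : Set D} (hW : IsPreconnected W) (hu : u ∈ W) (hv : v ∈ W)
    (hWr : ∀ w ∈ W, dist w u ≤ r) :
    ∃ f : Path (ι u) (ι v), IsChainPath ι r f ∧ ∀ t, dist (f t) (ι u) ≤ r := by
  have hvr : ι v ∈ Metric.closedBall (ι u) r := by
    rw [Metric.mem_closedBall, hι.dist_eq]
    exact hWr v hv
  have hur : ι u ∈ Metric.closedBall (ι u) r :=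
    Metric.mem_closedBall_self (dist_nonneg.trans (hWr v hv))
  obtain ⟨f, hf⟩ := ((convex_closedBall (ι u) r).isPathConnected ⟨_, hur⟩).joinedIn _ hur _ hvr
  exact ⟨f, .link hW hu hv hWr hf, hf⟩

variable [LocallyConnectedSpace D]

lemma exists_of_isPreconnected (hι : Isometry ι) (hr : 0 < r) {W : Set D} (hW : IsPreconnected W)
    (hu : u ∈ W) (hv : v ∈ W) :
    ∃ g : Path (ι u) (ι v), IsChainPath ι r g ∧ ∀ t, ∃ w ∈ W, dist (g t) (ι w) ≤ r := by
  refine hW.induction₂' (fun u v ↦ ∃ g : Path (ι u) (ι v), IsChainPath ι r g ∧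
    ∀ t, ∃ w ∈ W, dist (g t) (ι w) ≤ r) (fun x hx ↦ ?_) ?_ hu hv
  · obtain ⟨V, hVr, hVo, hxV, hV⟩ := exists_isOpen_isPreconnected_subset_ball x (half_pos hr)
    have exists_link_of_mem : ∀ a ∈ V, a ∈ W → ∀ b ∈ V, ∃ g : Path (ι a) (ι b),
        IsChainPath ι r g ∧ ∀ t, ∃ w ∈ W, dist (g t) (ι w) ≤ r := by
      intro a ha haW b hb
      have hVa (w) (hw : w ∈ V) : dist w a ≤ r := by
        linarith [dist_triangle_right w a x, Metric.mem_ball.1 (hVr hw), Metric.mem_ball.1 (hVr ha)]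
      obtain ⟨g, hg, hga⟩ := exists_link hι hV ha hb hVa
      exact ⟨g, hg, fun t ↦ ⟨a, haW, hga t⟩⟩
    filter_upwards [mem_nhdsWithin_of_mem_nhds (hVo.mem_nhds hxV), self_mem_nhdsWithin]
      with y hy hyW
    exact ⟨exists_link_of_mem x hxV hx y hy, exists_link_of_mem y hy hyW x hxV⟩
  · rintro x y z - - - ⟨f, hf, hfW⟩ ⟨g, hg, hgW⟩
    exact ⟨f.trans g, hf.trans hg,
      forall_path_trans_apply (P := fun y ↦ ∃ w ∈ W, dist y (ι w) ≤ r) hfW hgW⟩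

lemma exists_refinement (hι : Isometry ι) (hr' : 0 < r') (hle : r' ≤ r) (hf : IsChainPath ι r f) :
    ∃ g : Path (ι u) (ι v), IsChainPath ι r' g ∧ ∀ t, dist (f t) (g t) ≤ 3 * r := by
  induction hf with
  | @link u v W f hW hu hv hWr hf =>
    obtain ⟨g, hg, hgW⟩ := exists_of_isPreconnected hι hr' hW hu hv
    refine ⟨g, hg, fun t ↦ ?_⟩
    obtain ⟨w, hw, hgw⟩ := hgW t
    calc dist (f t) (g t)
      _ ≤ dist (f t) (ι u) + dist (ι u) (ι w) + dist (ι w) (g t) := dist_triangle4 ..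
      _ ≤ r + r + r := by
        gcongr
        · exact hf t
        · rw [hι.dist_eq, dist_comm]
          exact hWr w hw
        · rw [dist_comm]
          exact hgw.trans hle
      _ = 3 * r := by ring
  | trans _ _ ihf ihg =>
    obtain ⟨f', hf', hff'⟩ := ihf
    obtain ⟨g', hg', hgg'⟩ := ihg
    refine ⟨f'.trans g', hf'.trans hg', fun t ↦ ?_⟩
    rw [Path.trans_apply, Path.trans_apply]
    split_ifs
    exacts [hff' _, hgg' _]

lemma exists_seq_refinement (hι : Isometry ι) (hr : 0 < r) (hf : IsChainPath ι r f) :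
    ∃ F : ℕ → Path (ι u) (ι v), F 0 = f ∧ (∀ n, IsChainPath ι (r / 2 ^ n) (F n)) ∧
      ∀ n t, dist (F n t) (F (n + 1) t) ≤ 3 * (r / 2 ^ n) := by
  have refine_next (n : ℕ) (g : {g : Path (ι u) (ι v) // IsChainPath ι (r / 2 ^ n) g}) :
      ∃ g' : {g : Path (ι u) (ι v) // IsChainPath ι (r / 2 ^ (n + 1)) g},
        ∀ t, dist (g.1 t) (g'.1 t) ≤ 3 * (r / 2 ^ n) := by
    have hle : r / 2 ^ (n + 1) ≤ r / 2 ^ n := by gcongr <;> norm_num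
    obtain ⟨g', hg', hgg'⟩ := g.2.exists_refinement hι (by positivity) hle
    exact ⟨⟨g', hg'⟩, hgg'⟩
  choose next hnext using refine_next
  let F (n : ℕ) : {g : Path (ι u) (ι v) // IsChainPath ι (r / 2 ^ n) g} :=
    Nat.rec ⟨f, by simpa using hf⟩ next n
  exact ⟨fun n ↦ (F n).1, rfl, fun n ↦ (F n).2, fun n ↦ hnext n (F n)⟩

lemma exists_path_dist_le [CompleteSpace D] [CompleteSpace E] (hι : Isometry ι) (hr : 0 < r)
    (hf : IsChainPath ι r f) : ∃ p : Path u v, ∀ t, dist (f t) (ι (p t)) ≤ 6 * r := by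
  obtain ⟨F, rfl, hF, hFd⟩ := hf.exists_seq_refinement hι hr
  have hFd' (n : ℕ) : dist (F n : C(I, E)) (F (n + 1)) ≤ 6 * r / 2 / 2 ^ n :=
    (ContinuousMap.dist_le (by positivity)).2 fun t ↦ (hFd n t).trans_eq (by ring)
  obtain ⟨g, hg⟩ := cauchySeq_tendsto_of_complete (cauchySeq_of_le_geometric_two hFd')
  have hFg (t : I) : Tendsto (fun n ↦ F n t) atTop (𝓝 (g t)) :=
    ((continuous_eval_const t).tendsto g).comp hg
  have hr0 : Tendsto (fun n : ℕ ↦ r / 2 ^ n) atTop (𝓝 0) :=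
    tendsto_const_nhds.div_atTop (tendsto_pow_atTop_atTop_of_one_lt one_lt_two)
  have mem_range (t : I) : g t ∈ range ι := by
    choose w hw using fun n ↦ (hF n).exists_dist_le t
    refine hι.isClosedEmbedding.isClosed_range.mem_of_tendsto (f := fun n ↦ ι (w n)) (b := atTop)
      ?_ (.of_forall fun n ↦ mem_range_self _)
    rw [tendsto_iff_of_dist (squeeze_zero (fun _ ↦ dist_nonneg)
      (fun n ↦ (dist_comm _ _).trans_le (hw n)) hr0)]
    exact hFg t
  choose p hp using mem_range
  have hpc : Continuous p := by
    simpa only [hι.isEmbedding.continuous_iff, comp_def, hp] using g.continuous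
  have hp0 : p 0 = u := hι.injective ((hp 0).trans (tendsto_nhds_unique (hFg 0) (by simp)))
  have hp1 : p 1 = v := hι.injective ((hp 1).trans (tendsto_nhds_unique (hFg 1) (by simp)))
  refine ⟨⟨⟨p, hpc⟩, hp0, hp1⟩, fun t ↦ ?_⟩
  calc dist (F 0 t) (ι (p t))
    _ = dist ((F 0 : C(I, E)) t) (g t) := by rw [hp]; rfl
    _ ≤ dist (F 0 : C(I, E)) g := ContinuousMap.dist_apply_le_dist t
    _ ≤ 6 * r := dist_le_of_le_geometric_two_of_tendsto₀ hFd' hg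

end IsChainPath

theorem locallyPathConnectedSpace_of_completeSpace [CompleteSpace D]
    [TopologicalSpace.SeparableSpace D] [LocallyConnectedSpace D] :
    LocallyPathConnectedSpace D := by
  have hι := kuratowskiEmbedding.isometry D
  refine locallyPathConnectedSpace_iff_pathComponentIn_mem_nhds.2 fun x U hU hx ↦ ?_
  obtain ⟨ε, hε, hεU⟩ := Metric.isOpen_iff.1 hU x hx
  have hε8 : 0 < ε / 8 := by positivity
  obtain ⟨V, hVε, hVo, hxV, hV⟩ := exists_isOpen_isPreconnected_subset_ball x hε8
  filter_upwards [hVo.mem_nhds hxV] with y hy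
  obtain ⟨f, hf, hfx⟩ := IsChainPath.exists_link hι hV hxV hy fun w hw ↦ (hVε hw).le
  obtain ⟨p, hp⟩ := hf.exists_path_dist_le hι hε8
  refine ⟨p, fun t ↦ hεU ?_⟩
  rw [Metric.mem_ball, ← hι.dist_eq]
  linarith [hp t, hfx t, dist_triangle_left (kuratowskiEmbedding D (p t)) (kuratowskiEmbedding D x)
    (f t)]

end LocalPathConnectedness

section WhitneyMap

open TopologicalSpace

lemma exists_infDist_lt_of_lt {D : Type*} [MetricSpace D] {x : ℕ → D} (hx : DenseRange x)
    {K L : NonemptyCompacts D} (hKL : K < L) :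
    ∃ n, min 1 (Metric.infDist (x n) (L : Set D)) < min 1 (Metric.infDist (x n) (K : Set D)) := by
  obtain ⟨-, y, hyL, hyK⟩ := SetLike.lt_iff_le_and_exists.1 hKL
  have hy : 0 < Metric.infDist y K :=
    (K.isCompact.isClosed.notMem_iff_infDist_pos K.nonempty).1 hyK
  obtain ⟨n, hn⟩ := hx.exists_dist_lt y (lt_min one_pos (half_pos hy))
  obtain ⟨hn1, hn2⟩ := lt_min_iff.1 hn
  have hL : Metric.infDist (x n) (L : Set D) ≤ dist y (x n) :=
    dist_comm y (x n) ▸ Metric.infDist_le_dist_of_mem hyL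
  have hK : Metric.infDist y K ≤ Metric.infDist (x n) K + dist y (x n) :=
    Metric.infDist_le_infDist_add_dist
  exact ⟨n, lt_min (min_lt_of_right_lt (by linarith)) (min_lt_of_right_lt (by linarith))⟩

lemma exists_continuous_strictMono_nonemptyCompacts (D : Type*) [MetricSpace D] [SeparableSpace D] :
    ∃ w : NonemptyCompacts D → ℝ, Continuous w ∧ StrictMono w := by
  rcases isEmpty_or_nonempty D with hD | hD
  · have : IsEmpty (NonemptyCompacts D) := ⟨fun K ↦ hD.elim K.nonempty.some⟩
    exact ⟨0, continuous_zero, fun K ↦ isEmptyElim K⟩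
  obtain ⟨x, hx⟩ := exists_dense_seq D
  let φ (n : ℕ) (K : NonemptyCompacts D) : ℝ := (1 / 2) ^ n * min 1 (Metric.infDist (x n) K)
  have hφ (n K) : ‖φ n K‖ ≤ (1 / 2) ^ n := by
    rw [Real.norm_of_nonneg (by have := Metric.infDist_nonneg (x := x n) (s := K); positivity)]
    exact mul_le_of_le_one_right (by positivity) (min_le_left _ _)
  have summable_φ (K) : Summable (φ · K) :=
    .of_norm_bounded summable_geometric_two fun n ↦ hφ n K
  refine ⟨fun K ↦ -∑' n, φ n K, (continuous_tsum (fun n ↦ ?_) summable_geometric_two hφ).neg,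
    fun K L hKL ↦ neg_lt_neg ?_⟩
  · exact continuous_const.mul
      (continuous_const.min (Metric.lipschitz_infDist_set (x n)).continuous)
  · obtain ⟨n, hn⟩ := exists_infDist_lt_of_lt hx hKL
    refine (summable_φ L).tsum_lt_tsum (i := n) (fun m ↦ ?_) ?_ (summable_φ K)
    · exact mul_le_mul_of_nonneg_left (min_le_min_left _
        (Metric.infDist_le_infDist_of_subset hKL.le K.nonempty)) (by positivity)
    · exact mul_lt_mul_of_pos_left hn (by positivity)

end WhitneyMap

section Arcs

variable {T D : Type*} [LinearOrder T] [BoundedOrder T] [TopologicalSpace T]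

/-- A closed set of parameters of the path `p`, containing both end parameters, which results from
cutting out loops of `p`: over each of its gaps, `p` returns to the same point. -/
structure IsLoopCut (p : T → D) (A : Set T) : Prop where
  isClosed : IsClosed A
  bot_mem : ⊥ ∈ A
  top_mem : ⊤ ∈ A
  eq_of_gap : ∀ ⦃s⦄, s ∈ A → ∀ ⦃t⦄, t ∈ A → s < t → Disjoint A (Ioo s t) → p s = p t

namespace IsLoopCut

variable {p : T → D} {A : Set T} {s t : T}

lemma univ [DenselyOrdered T] (p : T → D) : IsLoopCut p univ where
  isClosed := isClosed_univ
  bot_mem := trivial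
  top_mem := trivial
  eq_of_gap _ _ _ _ hst h :=
    ((nonempty_Ioo.2 hst).ne_empty (disjoint_univ.1 h.symm)).elim

variable [OrderTopology T]

lemma diff_Ioo (hA : IsLoopCut p A) (hs : s ∈ A) (ht : t ∈ A) (hst : p s = p t) :
    IsLoopCut p (A \ Ioo s t) where
  isClosed := hA.isClosed.sdiff isOpen_Ioo
  bot_mem := ⟨hA.bot_mem, fun h ↦ not_lt_bot h.1⟩
  top_mem := ⟨hA.top_mem, fun h ↦ not_top_lt h.2⟩
  eq_of_gap := by
    rintro a ⟨ha, has⟩ b ⟨hb, hbs⟩ hab hgap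
    have hs' : s ∉ Ioo a b := fun h ↦ disjoint_left.1 hgap ⟨hs, fun h' ↦ h'.1.false⟩ h
    have ht' : t ∉ Ioo a b := fun h ↦ disjoint_left.1 hgap ⟨ht, fun h' ↦ h'.2.false⟩ h
    by_cases hA_gap : Disjoint A (Ioo a b)
    · exact hA.eq_of_gap ha hb hab hA_gap
    · obtain ⟨c, hcA, hc⟩ := not_disjoint_iff.1 hA_gap
      have hcs : c ∈ Ioo s t := by_contra fun h ↦ disjoint_left.1 hgap ⟨hcA, h⟩ hc
      obtain ⟨rfl, rfl⟩ : a = s ∧ b = t := by grind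
      exact hst

lemma disjoint_Ioo_of_minimal (hA : Minimal (IsLoopCut p) A) (hs : s ∈ A) (ht : t ∈ A)
    (hst : p s = p t) : Disjoint A (Ioo s t) :=
  (sdiff_eq_left (α := Set T)).1
    (sdiff_subset.antisymm (hA.le_of_le (hA.prop.diff_Ioo hs ht hst) sdiff_subset))

variable [CompactSpace T]

lemma exists_eq_of_mem (hA : IsLoopCut p A) {x : T} (hs : s ∈ A) (ht : t ∈ A)
    (hx : x ∈ Ioo s t) : ∃ a ∈ A ∩ Icc s x, ∃ b ∈ A ∩ Icc x t, p a = p b := by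
  by_cases hxA : x ∈ A
  · exact ⟨x, ⟨hxA, hx.1.le, le_rfl⟩, x, ⟨hxA, le_rfl, hx.2.le⟩, rfl⟩
  obtain ⟨a, haA, ha⟩ := (hA.isClosed.inter isClosed_Icc).isCompact.exists_isGreatest
    (⟨s, hs, le_rfl, hx.1.le⟩ : (A ∩ Icc s x).Nonempty)
  obtain ⟨b, hbA, hb⟩ := (hA.isClosed.inter isClosed_Icc).isCompact.exists_isLeast
    (⟨t, ht, hx.2.le, le_rfl⟩ : (A ∩ Icc x t).Nonempty)
  have hab : a < b := (haA.2.2.lt_of_ne (by grind)).trans_le hbA.2.1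
  refine ⟨a, haA, b, hbA, hA.eq_of_gap haA.1 hbA.1 hab (disjoint_left.2 fun c hc hcab ↦ ?_)⟩
  rcases le_total c x with hcx | hxc
  · exact hcab.1.not_ge (ha ⟨hc, haA.2.1.trans hcab.1.le, hcx⟩)
  · exact hcab.2.not_ge (hb ⟨hc, hxc, hcab.2.le.trans hbA.2.2⟩)

variable [DenselyOrdered T] [TopologicalSpace D] [T2Space D]

lemma sInter_of_isChain (hp : Continuous p) {c : Set (Set T)} (hc : ∀ A ∈ c, IsLoopCut p A)
    (hchain : IsChain (· ⊆ ·) c) (hne : c.Nonempty) : IsLoopCut p (⋂₀ c) where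
  isClosed := isClosed_sInter fun A hA ↦ (hc A hA).isClosed
  bot_mem A hA := (hc A hA).bot_mem
  top_mem A hA := (hc A hA).top_mem
  eq_of_gap := by
    intro s hs t ht hst hgap
    obtain ⟨x, hx⟩ := nonempty_Ioo.2 hst
    let P (A : Set T) : Set (T × T) := (A ∩ Icc s x) ×ˢ (A ∩ Icc x t) ∩ {q | p q.1 = p q.2}
    have hP (A : c) : IsClosed (P A) :=
      have := (hc A A.2).isClosed
      ((this.inter isClosed_Icc).prod (this.inter isClosed_Icc)).inter
        (isClosed_eq (hp.comp continuous_fst) (hp.comp continuous_snd))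
    have P_nonempty (A : c) : (P A).Nonempty := by
      obtain ⟨a, ha, b, hb, hab⟩ := (hc A A.2).exists_eq_of_mem (hs A A.2) (ht A A.2) hx
      exact ⟨(a, b), ⟨ha, hb⟩, hab⟩
    have P_directed : Directed (· ⊇ ·) fun A : c ↦ P A := by
      have P_mono {A B : Set T} (h : A ⊆ B) : P A ⊆ P B := by
        simp only [P]
        gcongr
      intro A B
      rcases hchain.total A.2 B.2 with h | h
      exacts [⟨A, subset_rfl, P_mono h⟩, ⟨B, P_mono h, subset_rfl⟩]
    have := hne.to_subtype
    obtain ⟨⟨a, b⟩, hab⟩ := IsCompact.nonempty_iInter_of_directed_nonempty_isCompact_isClosed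
      _ P_directed P_nonempty (fun A ↦ (hP A).isCompact) hP
    replace hab : ∀ A ∈ c, (a, b) ∈ P A := fun A hA ↦ mem_iInter.1 hab ⟨A, hA⟩
    obtain ⟨A, hA⟩ := hne
    obtain ⟨⟨⟨-, hsa, hax⟩, -, hxb, hbt⟩, hpab⟩ := hab A hA
    have ha : a ∉ Ioo s t := disjoint_left.1 hgap fun A hA ↦ (hab A hA).1.1.1
    have hb : b ∉ Ioo s t := disjoint_left.1 hgap fun A hA ↦ (hab A hA).1.2.1
    obtain ⟨rfl, rfl⟩ : a = s ∧ b = t := by grind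
    exact hpab

lemma exists_minimal (hp : Continuous p) : ∃ A, Minimal (IsLoopCut p) A := by
  obtain ⟨A, -, hA⟩ := zorn_superset_nonempty {A | IsLoopCut p A}
    (fun c hc hchain hne ↦ ⟨_, sInter_of_isChain hp hc hchain hne, fun _ ↦ sInter_subset_of_mem⟩)
    _ (univ p)
  exact ⟨A, hA⟩

end IsLoopCut

section ArcParameter

open TopologicalSpace

variable {p : T → D} {A : Set T} {s t : T}

lemma image_inter_Iic_eq_iff_of_minimal [OrderTopology T] (hA : Minimal (IsLoopCut p) A)
    (hs : s ∈ A) (ht : t ∈ A) (hst : s ≤ t) :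
    p '' (A ∩ Iic s) = p '' (A ∩ Iic t) ↔ p s = p t := by
  refine ⟨fun h ↦ ?_, fun h ↦ ?_⟩
  · obtain ⟨u, ⟨hu, hus⟩, hut⟩ : p t ∈ p '' (A ∩ Iic s) := h ▸ mem_image_of_mem p ⟨ht, le_rfl⟩
    have hs_notMem := disjoint_left.1 (IsLoopCut.disjoint_Ioo_of_minimal hA hu ht hut) hs
    obtain rfl | rfl : s = u ∨ s = t := by grind
    exacts [hut, rfl]
  · refine (image_mono (by gcongr)).antisymm ?_
    rintro _ ⟨u, ⟨hu, hut⟩, rfl⟩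
    have hu_notMem := disjoint_left.1 (IsLoopCut.disjoint_Ioo_of_minimal hA hs ht h) hu
    obtain hus | rfl : u ≤ s ∨ u = t := by grind
    exacts [mem_image_of_mem p ⟨hu, hus⟩, h ▸ mem_image_of_mem p ⟨hs, le_rfl⟩]

variable [OrderTopology T] [CompactSpace T]

-- The parameter is the Whitney size of the part of the path already traversed.
lemma exists_continuous_monotoneOn_of_minimal_isLoopCut [MetricSpace D] [SeparableSpace D]
    (hp : Continuous p) (hA : Minimal (IsLoopCut p) A) :
    ∃ φ : T → ℝ, Continuous φ ∧ MonotoneOn φ A ∧ ∀ s ∈ A, ∀ t ∈ A, φ s = φ t ↔ p s = p t := by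
  obtain ⟨w, hw, hw_mono⟩ := exists_continuous_strictMono_nonemptyCompacts D
  let A' : NonemptyCompacts T := ⟨⟨A, hA.prop.isClosed.isCompact⟩, ⊥, hA.prop.bot_mem⟩
  let K (t : T) : NonemptyCompacts D := A'.map (fun u ↦ p (min u t)) (by fun_prop)
  have hK : Continuous K := by
    refine Continuous.nonemptyCompacts_map' (g := fun t u ↦ p (min u t)) continuous_const ?_
    exact hp.comp (continuous_snd.min continuous_fst)
  have coe_K : ∀ t ∈ A, (K t : Set D) = p '' (A ∩ Iic t) := fun t ht ↦ by
    ext y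
    constructor
    · rintro ⟨u, hu, rfl⟩
      exact ⟨min u t, ⟨by grind, min_le_right u t⟩, rfl⟩
    · rintro ⟨u, ⟨hu, hut⟩, rfl⟩
      exact ⟨u, hu, by simp only [min_eq_left hut]⟩
  have K_mono : MonotoneOn K A := fun s hs t ht hst ↦ by
    rw [← SetLike.coe_subset_coe, coe_K s hs, coe_K t ht]
    gcongr
  refine ⟨w ∘ K, hw.comp hK, hw_mono.monotone.comp_monotoneOn K_mono, ?_⟩
  suffices ∀ s ∈ A, ∀ t ∈ A, s ≤ t → (w (K s) = w (K t) ↔ p s = p t) by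
    intro s hs t ht
    rcases le_total s t with hst | hts
    exacts [this s hs t ht hst, eq_comm.trans ((this t ht s hs hts).trans eq_comm)]
  intro s hs t ht hst
  rw [← image_inter_Iic_eq_iff_of_minimal hA hs ht hst, ← coe_K s hs, ← coe_K t ht,
    SetLike.coe_set_eq]
  exact ⟨fun h ↦ (K_mono hs ht hst).eq_of_not_lt fun h' ↦ (hw_mono h').ne h, congrArg w⟩

lemma IsLoopCut.image_eq_Icc (hA : IsLoopCut p A) {φ : T → ℝ} (hφ : Continuous φ)
    (hmono : MonotoneOn φ A) (hφp : ∀ s ∈ A, ∀ t ∈ A, p s = p t → φ s = φ t) :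
    φ '' A = Icc (φ ⊥) (φ ⊤) := by
  refine Subset.antisymm ?_ fun y hy ↦ ?_
  · rintro _ ⟨t, ht, rfl⟩
    exact ⟨hmono hA.bot_mem ht bot_le, hmono ht hA.top_mem le_top⟩
  obtain ⟨s, ⟨hs, hsy⟩, hs_max⟩ := (hA.isClosed.inter (isClosed_Iic.preimage hφ)).isCompact
    |>.exists_isGreatest ⟨⊥, hA.bot_mem, hy.1⟩
  obtain ⟨t, ⟨ht, hyt⟩, ht_min⟩ := (hA.isClosed.inter (isClosed_Ici.preimage hφ)).isCompact
    |>.exists_isLeast ⟨⊤, hA.top_mem, hy.2⟩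
  rcases le_or_gt t s with hts | hst
  · exact ⟨s, hs, le_antisymm hsy (hyt.trans (hmono ht hs hts))⟩
  · have hgap : Disjoint A (Ioo s t) := disjoint_left.2 fun u hu hust ↦
      (le_total (φ u) y).elim (fun h ↦ hust.1.not_ge (hs_max ⟨hu, h⟩))
        fun h ↦ hust.2.not_ge (ht_min ⟨hu, h⟩)
    have hφst := hφp s hs t ht (hA.eq_of_gap hs ht hst hgap)
    exact ⟨s, hs, le_antisymm hsy (hφst ▸ hyt)⟩

lemma exists_continuous_injective_Icc_comp_eq [DenselyOrdered T] [MetricSpace D] [SeparableSpace D]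
    (hp : Continuous p) : ∃ (a b : ℝ) (hab : a ≤ b) (γ : Icc a b → D), Continuous γ ∧ Injective γ ∧
      range γ ⊆ range p ∧ γ ⟨a, left_mem_Icc.2 hab⟩ = p ⊥ ∧ γ ⟨b, right_mem_Icc.2 hab⟩ = p ⊤ := by
  obtain ⟨A, hA⟩ := IsLoopCut.exists_minimal hp
  obtain ⟨φ, hφ, hmono, hφp⟩ := exists_continuous_monotoneOn_of_minimal_isLoopCut hp hA
  have image_φ := hA.prop.image_eq_Icc hφ hmono fun s hs t ht ↦ (hφp s hs t ht).2
  let ψ : C(A, Icc (φ ⊥) (φ ⊤)) :=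
    ⟨fun t ↦ ⟨φ t, image_φ ▸ mem_image_of_mem φ t.2⟩, by fun_prop⟩
  have ψ_surjective : Surjective ψ := by
    rintro ⟨y, hy⟩
    obtain ⟨t, ht, rfl⟩ := image_φ ▸ hy
    exact ⟨⟨t, ht⟩, rfl⟩
  have := isCompact_iff_compactSpace.1 hA.prop.isClosed.isCompact
  have hψ : IsQuotientMap ψ := ψ.continuous.isClosedMap.isQuotientMap ψ.continuous ψ_surjective
  have hpψ (s t : A) : ψ s = ψ t ↔ p s = p t := Subtype.ext_iff.trans (hφp s s.2 t t.2)
  let q : C(A, D) := ⟨fun t ↦ p t, by fun_prop⟩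
  have hq : FactorsThrough q ψ := fun s t ↦ (hpψ s t).1
  let γ := hψ.lift q hq
  have γ_ψ : ∀ t : A, γ (ψ t) = p t := DFunLike.congr_fun (hψ.lift_comp q hq)
  refine ⟨φ ⊥, φ ⊤, hmono hA.prop.bot_mem hA.prop.top_mem bot_le, γ, γ.continuous, ?_, ?_,
    γ_ψ ⟨⊥, hA.prop.bot_mem⟩, γ_ψ ⟨⊤, hA.prop.top_mem⟩⟩
  · refine ψ_surjective.forall₂.2 fun s t h ↦ (hpψ s t).2 ?_
    rwa [γ_ψ, γ_ψ] at h
  · refine range_subset_iff.2 (ψ_surjective.forall.2 fun t ↦ ?_)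
    rw [γ_ψ]
    exact mem_range_self _

lemma exists_injective_path [MetricSpace D] [SeparableSpace D] {x y : D} (hxy : x ≠ y)
    (p : Path x y) : ∃ γ : Path x y, Injective γ ∧ range γ ⊆ range p := by
  obtain ⟨a, b, hab, γ, hγ, hγi, hγp, hγa, hγb⟩ :=
    exists_continuous_injective_Icc_comp_eq p.continuous
  replace hγa := hγa.trans p.source
  replace hγb := hγb.trans p.target
  have hlt : a < b := hab.lt_of_ne fun h ↦ hxy (by rw [← hγa, ← hγb]; congr)
  let e := (iccHomeoI a b hlt).symm
  have he0 : e 0 = ⟨a, left_mem_Icc.2 hab⟩ := by ext; simp [e]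
  have he1 : e 1 = ⟨b, right_mem_Icc.2 hab⟩ := by ext; simp [e]
  exact ⟨⟨⟨γ ∘ e, hγ.comp e.continuous⟩, by simp [he0, hγa], by simp [he1, hγb]⟩,
    hγi.comp e.injective, (range_comp_subset_range e γ).trans hγp⟩

end ArcParameter

end Arcs

section SimpleClosedCurves

variable {X Y : Type*} [TopologicalSpace X] [TopologicalSpace Y]

lemma nonempty_circle_homeomorph_sphere :
    Nonempty (Circle ≃ₜ Metric.sphere (0 : EuclideanSpace ℝ (Fin 2)) 1) := by
  let e : ℂ ≃ₗᵢ[ℝ] EuclideanSpace ℝ (Fin 2) := Complex.orthonormalBasisOneI.repr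
  refine ⟨e.toHomeomorph.subtype (p := (· ∈ Submonoid.unitSphere ℂ)) fun x ↦ ?_⟩
  simp [Submonoid.unitSphere]

lemma IsSimpleClosedCurve.image {S : Set X} (hS : IsSimpleClosedCurve S) {f : X → Y}
    (hf : IsEmbedding f) : IsSimpleClosedCurve (f '' S) :=
  hS.map (hf.homeomorphImage S).symm.trans

variable {a b x y : X}

lemma injective_subpath {γ : Path x y} (hγ : Injective γ) {s t : I} (hst : s ≠ t) :
    Injective (γ.subpath s t) := by
  refine hγ.comp fun u v huv ↦ Subtype.ext ?_
  have h : ((t : ℝ) - s) * (u - v) = 0 := by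
    have := Subtype.ext_iff.1 huv
    simp only [Icc.coe_convexComb] at this
    linear_combination this
  refine sub_eq_zero.1 ((mul_eq_zero.1 h).resolve_left (sub_ne_zero.2 ?_))
  exact fun h ↦ hst (Subtype.ext h.symm)

lemma exists_Ioo_of_notMem_isClosed (γ : Path x y) {F : Set X} (hF : IsClosed F) (hx : x ∈ F)
    (hy : y ∈ F) {t : I} (ht : γ t ∉ F) :
    ∃ s u, s < u ∧ γ s ∈ F ∧ γ u ∈ F ∧ ∀ v ∈ Ioo s u, γ v ∉ F := by
  obtain ⟨s, ⟨hs, hst : s ≤ t⟩, hs_max⟩ := ((hF.preimage γ.continuous).inter isClosed_Iic).isCompact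
    |>.exists_isGreatest ⟨0, by simpa using hx, t.2.1⟩
  obtain ⟨u, ⟨hu, htu : t ≤ u⟩, hu_min⟩ := ((hF.preimage γ.continuous).inter isClosed_Ici).isCompact
    |>.exists_isLeast ⟨1, by simpa using hy, t.2.2⟩
  have hsu : s < u := (hst.trans htu).lt_of_ne fun h ↦ ht (le_antisymm hst (h ▸ htu) ▸ hs)
  refine ⟨s, u, hsu, hs, hu, fun v hv hvF ↦ ?_⟩
  rcases le_total v t with hvt | htv
  exacts [hv.1.not_ge (hs_max ⟨hvF, hvt⟩), hv.2.not_ge (hu_min ⟨hvF, htv⟩)]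

variable [T2Space X]

lemma exists_isSimpleClosedCurve_of_injOn_Ico {f : ℝ → X} (hf : Continuous f) (h01 : f 0 = f 1)
    (hinj : InjOn f (Ico 0 1)) : ∃ S : Set X, IsSimpleClosedCurve S := by
  have : Fact ((0 : ℝ) < 1) := ⟨one_pos⟩
  let g : AddCircle (1 : ℝ) → X := AddCircle.liftIco 1 0 f
  have hg : Continuous g := AddCircle.liftIco_zero_continuous h01 hf.continuousOn
  have g_injective : Injective g := by
    have hinj' : InjOn f (Ico 0 (0 + 1)) := by rwa [zero_add]
    exact hinj'.injective.comp (AddCircle.equivIco 1 0).injective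
  obtain ⟨e⟩ := nonempty_circle_homeomorph_sphere
  exact ⟨range g, ⟨(hg.isClosedEmbedding g_injective).isEmbedding.toHomeomorph.symm.trans
    ((AddCircle.homeomorphCircle one_ne_zero).trans e)⟩⟩

lemma exists_isSimpleClosedCurve_of_range_inter_subset {γ : Path a b} {δ : Path b a}
    (hγ : Injective γ) (hδ : Injective δ) (h : range γ ∩ range δ ⊆ {a, b}) :
    ∃ S : Set X, IsSimpleClosedCurve S := by
  have apply_ne (s u : I) (hu0 : 0 < u) (hu1 : u < 1) : γ s ≠ δ u := by
    intro hsu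
    rcases h ⟨⟨s, rfl⟩, u, hsu.symm⟩ with hs | hs
    · exact hu1.ne (hδ (by rw [← hsu, hs, δ.target]))
    · exact hu0.ne' (hδ (by rw [← hsu, hs, δ.source]))
  have extend_ne {s u : ℝ} (hs : s ∈ Ico 0 1) (hu : u ∈ Ico 0 1) (hs2 : s ≤ 1 / 2)
      (hu2 : 1 / 2 < u) : (γ.trans δ).extend s ≠ (γ.trans δ).extend u := by
    rw [Path.extend_trans_of_le_half _ _ hs2, Path.extend_trans_of_half_le _ _ hu2.le,
      Path.extend_apply γ ⟨by linarith [hs.1], by linarith⟩,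
      Path.extend_apply δ ⟨by linarith, by linarith [hu.2]⟩]
    refine apply_ne _ _ ?_ ?_ <;> rw [← Subtype.coe_lt_coe] <;> push_cast <;> linarith [hu.2]
  refine exists_isSimpleClosedCurve_of_injOn_Ico (γ.trans δ).continuous_extend (by simp)
    fun s hs u hu hsu ↦ ?_
  rcases le_or_gt s (1 / 2) with hs2 | hs2 <;> rcases le_or_gt u (1 / 2) with hu2 | hu2
  · rw [Path.extend_trans_of_le_half _ _ hs2, Path.extend_trans_of_le_half _ _ hu2,
      Path.extend_apply γ ⟨by linarith [hs.1], by linarith⟩,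
      Path.extend_apply γ ⟨by linarith [hu.1], by linarith⟩] at hsu
    linarith [Subtype.ext_iff.1 (hγ hsu)]
  · exact (extend_ne hs hu hs2 hu2 hsu).elim
  · exact (extend_ne hu hs hu2 hs2 hsu.symm).elim
  · rw [Path.extend_trans_of_half_le _ _ hs2.le, Path.extend_trans_of_half_le _ _ hu2.le,
      Path.extend_apply δ ⟨by linarith, by linarith [hs.2]⟩,
      Path.extend_apply δ ⟨by linarith, by linarith [hu.2]⟩] at hsu
    linarith [Subtype.ext_iff.1 (hδ hsu)]

lemma exists_isSimpleClosedCurve_of_notMem_range {γ η : Path x y} (hγ : Injective γ)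
    (hη : Injective η) {t : I} (ht : γ t ∉ range η) : ∃ S : Set X, IsSimpleClosedCurve S := by
  obtain ⟨a, b, hab, ⟨c, hc⟩, ⟨d, hd⟩, hgap⟩ := exists_Ioo_of_notMem_isClosed γ
    (isCompact_range η.continuous).isClosed ⟨0, η.source⟩ ⟨1, η.target⟩ ht
  have hdc : d ≠ c := fun h ↦ hab.ne (hγ (by rw [← hc, ← hd, h]))
  refine exists_isSimpleClosedCurve_of_range_inter_subset
    (δ := (η.subpath d c).cast hd.symm hc.symm)
    (injective_subpath hγ hab.ne) (injective_subpath hη hdc) ?_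
  rintro _ ⟨hw, v, rfl⟩
  rw [Path.range_subpath_of_le γ a b hab.le] at hw
  obtain ⟨w, ⟨haw, hwb⟩, hwv⟩ := hw
  have hw_notMem : w ∉ Ioo a b := fun hw ↦ hgap w hw (hwv ▸ mem_range_self _)
  obtain rfl | rfl : w = a ∨ w = b := by grind
  exacts [.inl hwv.symm, .inr hwv.symm]

end SimpleClosedCurves

section ConnectedIntervals

variable {D : Type*} [TopologicalSpace D] {a b c p x y z : D}

/-- The set of points lying in every connected set that contains `a` and `b`. In a dendrite this is
the arc with ends `a` and `b`. -/
def connectedInterval (a b : D) : Set D :=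
  {z | ∀ C, IsPreconnected C → a ∈ C → b ∈ C → z ∈ C}

lemma left_mem_connectedInterval : a ∈ connectedInterval a b := fun _ _ ha _ ↦ ha

lemma right_mem_connectedInterval : b ∈ connectedInterval a b := fun _ _ _ hb ↦ hb

lemma connectedInterval_comm : connectedInterval a b = connectedInterval b a :=
  ext fun _ ↦ ⟨fun h C hC hb ha ↦ h C hC ha hb, fun h C hC ha hb ↦ h C hC hb ha⟩

lemma connectedInterval_self : connectedInterval a a = {a} :=
  Subset.antisymm (fun _ hz ↦ hz {a} isPreconnected_singleton rfl rfl)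
    (singleton_subset_iff.2 left_mem_connectedInterval)

lemma connectedInterval_subset (ha : a ∈ connectedInterval x y) (hb : b ∈ connectedInterval x y) :
    connectedInterval a b ⊆ connectedInterval x y :=
  fun _ hz C hC hx hy ↦ hz C hC (ha C hC hx hy) (hb C hC hx hy)

lemma connectedInterval_subset_union :
    connectedInterval a c ⊆ connectedInterval a b ∪ connectedInterval b c := by
  intro z hz
  by_contra! hn
  simp only [connectedInterval, mem_union, mem_ofPred_eq, not_or, not_forall] at hn
  obtain ⟨⟨C, hC, haC, hbC, hzC⟩, C', hC', hbC', hcC', hzC'⟩ := hn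
  exact (hz (C ∪ C') (hC.union b hbC hbC' hC') (.inl haC) (.inr hcC')).elim hzC hzC'

lemma eq_of_mem_connectedInterval_of_mem [T1Space D] [ConnectedSpace D] [LocallyConnectedSpace D]
    (hx : x ∈ connectedInterval p y) (hy : y ∈ connectedInterval p x) : x = y := by
  by_contra hxy
  have hpx : p ≠ x := by
    rintro rfl
    rw [connectedInterval_self] at hy
    exact hxy hy.symm
  let P := connectedComponentIn {x}ᶜ p
  have hP : IsPreconnected P := isPreconnected_connectedComponentIn
  have hpP : p ∈ P := mem_connectedComponentIn hpx
  have hxP : x ∉ P := fun h ↦ connectedComponentIn_subset _ _ h rfl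
  have hx_closure : x ∈ closure P := by
    by_contra h
    have hclosed : closure P ⊆ P := hP.closure.subset_connectedComponentIn (subset_closure hpP)
      (subset_compl_singleton_iff.2 h)
    have hclopen : IsClopen P :=
      ⟨isClosed_of_closure_subset hclosed, isOpen_compl_singleton.connectedComponentIn⟩
    exact hxP (hclopen.eq_univ ⟨p, hpP⟩ ▸ mem_univ x)
  have hyP : y ∈ insert x P := hy _ (hP.subset_closure (subset_insert _ _)
    (insert_subset hx_closure subset_closure)) (mem_insert_of_mem _ hpP) (mem_insert _ _)
  exact hxP (hx P hP hpP (hyP.resolve_left (Ne.symm hxy)))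

lemma exists_isPreconnected_mem_nhds_notMem_closure [T3Space D] [LocallyConnectedSpace D]
    {C : Set D} (hC : IsPreconnected C) (hp : p ∈ C) (hy : y ∈ C) (hx : x ∉ C) :
    ∃ K ∈ 𝓝 y, IsPreconnected K ∧ p ∈ K ∧ x ∉ closure K := by
  let A : Set D := {y | ∃ K ∈ 𝓝 y, IsPreconnected K ∧ p ∈ K ∧ x ∉ closure K}
  have exists_nhd (z : D) (hz : z ∈ C) :
      ∃ V, IsOpen V ∧ z ∈ V ∧ IsPreconnected V ∧ x ∉ closure V := by
    obtain ⟨T, hT, hT_closed, hTx⟩ := exists_mem_nhds_isClosed_subset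
      (isOpen_compl_singleton.mem_nhds fun h : z = x ↦ hx (h ▸ hz))
    obtain ⟨V, hVT, hV, hzV, hV_conn⟩ :=
      locallyConnectedSpace_iff_subsets_isOpen_isConnected.1 ‹_› z T hT
    exact ⟨V, hV, hzV, hV_conn.isPreconnected, fun h ↦ hTx (closure_minimal hVT hT_closed h) rfl⟩
  have hA : IsOpen A := isOpen_iff_mem_nhds.2 fun z ⟨K, hK, hK'⟩ ↦
    (eventually_mem_nhds_iff.2 hK).mono fun w hw ↦ ⟨K, hw, hK'⟩
  refine hC.subset_of_closure_inter_subset hA ⟨p, hp, ?_⟩ ?_ hy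
  · obtain ⟨V, hV, hpV, hV'⟩ := exists_nhd p hp
    exact ⟨V, hV.mem_nhds hpV, hV'.1, hpV, hV'.2⟩
  · rintro z ⟨hzA, hzC⟩
    obtain ⟨V, hV, hzV, hV_conn, hxV⟩ := exists_nhd z hzC
    obtain ⟨w, hwV, K, hK, hK_conn, hpK, hxK⟩ := mem_closure_iff.1 hzA V hV hzV
    refine ⟨K ∪ V, mem_of_superset (hV.mem_nhds hzV) subset_union_right,
      hK_conn.union w (mem_of_mem_nhds hK) hwV hV_conn, .inl hpK, ?_⟩
    rw [closure_union]
    exact fun h ↦ h.elim hxK hxV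

lemma isClosed_setOf_mem_connectedInterval [T3Space D] [LocallyConnectedSpace D] (p : D) :
    IsClosed {q : D × D | q.1 ∈ connectedInterval p q.2} := by
  rw [← isOpen_compl_iff, isOpen_iff_mem_nhds]
  rintro ⟨x, y⟩ hxy
  simp only [connectedInterval, mem_compl_iff, mem_ofPred_eq, not_forall] at hxy
  obtain ⟨C, hC, hp, hy, hx⟩ := hxy
  obtain ⟨K, hK, hK_conn, hpK, hxK⟩ :=
    exists_isPreconnected_mem_nhds_notMem_closure hC hp hy hx
  filter_upwards [prod_mem_nhds (isClosed_closure.isOpen_compl.mem_nhds hxK) hK] with q hq h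
  exact hq.1 (subset_closure (h K hK_conn hpK hq.2))

end ConnectedIntervals

section ArcsInConnectedIntervals

variable {D : Type*} [MetricSpace D] [TopologicalSpace.SeparableSpace D]
  [LocallyPathConnectedSpace D] {x y : D}

lemma range_subset_connectedInterval (hD : ∀ S : Set D, ¬ IsSimpleClosedCurve S) {γ : Path x y}
    (hγ : Injective γ) : range γ ⊆ connectedInterval x y := by
  rintro _ ⟨t, rfl⟩ C hC hx hy
  by_contra ht
  have hxy : x ≠ y := fun h ↦ zero_ne_one (hγ (by rw [γ.source, γ.target, h]))
  let U := connectedComponentIn {γ t}ᶜ x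
  have hCU : C ⊆ U := hC.subset_connectedComponentIn hx (subset_compl_singleton_iff.2 ht)
  have hU : IsPathConnected U := isOpen_compl_singleton.connectedComponentIn
    |>.isConnected_iff_isPathConnected.1 ⟨⟨x, hCU hx⟩, isPreconnected_connectedComponentIn⟩
  obtain ⟨δ, hδ⟩ := hU.joinedIn x (hCU hx) y (hCU hy)
  obtain ⟨η, hη, hηδ⟩ := exists_injective_path hxy δ
  have hηU : range η ⊆ U := hηδ.trans (range_subset_iff.2 hδ)
  obtain ⟨S, hS⟩ := exists_isSimpleClosedCurve_of_notMem_range (t := t) hγ hη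
    fun h ↦ connectedComponentIn_subset _ _ (hηU h) rfl
  exact hD S hS

lemma mem_closure_connectedInterval_diff_singleton [ConnectedSpace D]
    (hD : ∀ S : Set D, ¬ IsSimpleClosedCurve S) (hxy : x ≠ y) :
    x ∈ closure (connectedInterval x y \ {x}) := by
  have : PathConnectedSpace D := pathConnectedSpace_iff_connectedSpace.2 ‹_›
  obtain ⟨γ, hγ, -⟩ := exists_injective_path hxy (PathConnectedSpace.somePath x y)
  have hmaps : MapsTo γ {0}ᶜ (connectedInterval x y \ {x}) := fun t ht ↦
    ⟨range_subset_connectedInterval hD hγ (mem_range_self t),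
      fun h ↦ ht (hγ (h.trans γ.source.symm))⟩
  have h := hmaps.closure γ.continuous (dense_compl_singleton (0 : I) |>.closure_eq ▸ mem_univ 0)
  rwa [γ.source] at h

end ArcsInConnectedIntervals

section FixedPoints

lemma exists_maximal_of_isCompact {α : Type*} [TopologicalSpace α] [Preorder α]
    [ClosedIciTopology α] {S : Set α} (hS : IsCompact S) (hne : S.Nonempty) :
    ∃ m, Maximal (· ∈ S) m := by
  obtain ⟨x, hx⟩ := hne
  suffices hub : ∀ c ⊆ S, IsChain (· ≤ ·) c → ∀ y ∈ c, ∃ u ∈ S, ∀ z ∈ c, z ≤ u by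
    obtain ⟨m, -, hm⟩ := zorn_le_nonempty₀ S hub x hx
    exact ⟨m, hm⟩
  intro c hcS hc y hy
  have : Nonempty c := ⟨⟨y, hy⟩⟩
  have hdir : Directed (· ⊇ ·) fun a : c ↦ Ici (a : α) := fun a b ↦
    (hc.total a.2 b.2).elim (fun h ↦ ⟨b, Ici_subset_Ici.2 h, subset_rfl⟩)
      fun h ↦ ⟨a, subset_rfl, Ici_subset_Ici.2 h⟩
  obtain ⟨u, huS, hu⟩ := hS.inter_iInter_nonempty _ (fun _ ↦ isClosed_Ici) fun s ↦ by
    obtain ⟨b, hb⟩ := hdir.finset_le s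
    exact ⟨b, hcS b.2, mem_iInter₂.2 fun a ha ↦ hb a ha self_mem_Ici⟩
  exact ⟨u, huS, fun z hz ↦ mem_iInter.1 hu ⟨z, hz⟩⟩

variable {D : Type*} [TopologicalSpace D] [ConnectedSpace D] [LocallyConnectedSpace D]

/-- The order on a dendrite with least element `p` in which `x ≤ y` means that `x` lies on the arc
from `p` to `y`. -/
abbrev cutpointOrder [T1Space D] (p : D) : PartialOrder D where
  le x y := x ∈ connectedInterval p y
  le_refl _ := right_mem_connectedInterval
  le_trans _ _ _ hxy hyz := connectedInterval_subset left_mem_connectedInterval hyz hxy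
  le_antisymm _ _ := eq_of_mem_connectedInterval_of_mem

lemma closedIciTopology_cutpointOrder [T3Space D] (p : D) :
    @ClosedIciTopology D _ (cutpointOrder p).toPreorder :=
  @ClosedIciTopology.mk D _ (cutpointOrder p).toPreorder fun a ↦
    (isClosed_setOf_mem_connectedInterval p).preimage (Continuous.prodMk_right a)

theorem hasFPP_of_mem_closure_connectedInterval_diff [T3Space D]
    (hD : ∀ x y : D, x ≠ y → x ∈ closure (connectedInterval x y \ {x})) {K : Set D}
    (hK : IsCompact K) (hK_conn : IsConnected K) : HasFPP K := by
  intro f hf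
  obtain ⟨p, hp⟩ := hK_conn.nonempty
  have : CompactSpace K := isCompact_iff_compactSpace.1 hK
  let := cutpointOrder p
  have := closedIciTopology_cutpointOrder p
  let S : Set K := {x | (x : D) ≤ f x}
  have hS : IsClosed S := (isClosed_setOf_mem_connectedInterval p).preimage
    (continuous_subtype_val.prodMk (continuous_subtype_val.comp hf))
  obtain ⟨_, ⟨m, hmS, rfl⟩, hm_max⟩ := exists_maximal_of_isCompact
    (hS.isCompact.image continuous_subtype_val) ⟨p, ⟨p, hp⟩, left_mem_connectedInterval, rfl⟩
  by_contra! hne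
  have hmf : (m : D) ≠ f m := fun h ↦ hne m (Subtype.ext h.symm)
  have hnear : ∀ᶠ z : K in 𝓝 m, (z : D) ∉ connectedInterval (f m : D) (f z) := by
    have hcont : Continuous fun z : K ↦ ((z : D), (f z : D)) := by fun_prop
    refine (((isClosed_setOf_mem_connectedInterval (f m : D)).preimage hcont).isOpen_compl).mem_nhds
      fun h : (m : D) ∈ connectedInterval (f m : D) (f m) ↦ hmf ?_
    rwa [connectedInterval_self] at h
  obtain ⟨V, hV, hVK⟩ := mem_nhds_subtype _ _ _ |>.1 hnear
  obtain ⟨z, hzV, hz, hzm⟩ := mem_closure_iff_nhds.1 (hD _ _ hmf) V hV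
  have hzK : z ∈ K := hz K hK_conn.isPreconnected m.2 (f m).2
  have hzfm : z ≤ f m := connectedInterval_subset hmS right_mem_connectedInterval hz
  have hzS : z ≤ f ⟨z, hzK⟩ := by
    refine (connectedInterval_subset_union hzfm).resolve_right ?_
    rw [connectedInterval_comm]
    exact hVK (a := ⟨z, hzK⟩) hzV
  have hmz : (m : D) ≤ z := by
    refine (connectedInterval_subset_union hmS).resolve_right fun h ↦ hzm ?_
    rw [connectedInterval_comm] at h hz
    exact eq_of_mem_connectedInterval_of_mem hz h
  exact hzm (le_antisymm (hm_max ⟨⟨z, hzK⟩, hzS, rfl⟩ hmz) hmz)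

end FixedPoints

section LocalDendrites

lemma HasFPP.of_homeomorph {Y Z : Type*} [TopologicalSpace Y] [TopologicalSpace Z]
    (hY : HasFPP Y) (e : Y ≃ₜ Z) : HasFPP Z := by
  intro f hf
  obtain ⟨y, hy⟩ := hY (e.symm ∘ f ∘ e) (by fun_prop)
  exact ⟨e y, e.symm_apply_eq.1 hy⟩

lemma locallyConnectedSpace_of_forall_exists_mem_nhds {X : Type*} [TopologicalSpace X]
    (h : ∀ x : X, ∃ N ∈ 𝓝 x, LocallyConnectedSpace N) : LocallyConnectedSpace X := by
  refine locallyConnectedSpace_iff_connected_subsets.2 fun x U hU ↦ ?_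
  obtain ⟨N, hN, hN_loc⟩ := h x
  obtain ⟨V, hV, hV_conn, hVU⟩ := locallyConnectedSpace_iff_connected_subsets.1 hN_loc
    ⟨x, mem_of_mem_nhds hN⟩ _ (continuous_subtype_val.continuousAt.preimage_mem_nhds hU)
  refine ⟨Subtype.val '' V, ?_, hV_conn.image _ continuous_subtype_val.continuousOn,
    image_subset_iff.2 hVU⟩
  rw [← map_nhds_subtype_coe_eq_nhds (mem_of_mem_nhds hN) hN]
  exact image_mem_map hV

variable {X : Type*} [TopologicalSpace X] [TopologicalSpace.MetrizableSpace X]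

theorem IsDendrite.hasFPP_of_isClosed_of_isConnected {D K : Set X} (hD : IsDendrite D)
    (hKD : K ⊆ D) (hK : IsClosed K) (hK_conn : IsConnected K) : HasFPP K := by
  obtain ⟨hD_compact, hD_conn, hD_loc, hD_curve⟩ := hD
  let := TopologicalSpace.metrizableSpaceMetric X
  have : CompactSpace D := isCompact_iff_compactSpace.1 hD_compact
  have : ConnectedSpace D := isConnected_iff_connectedSpace.1 hD_conn
  have : LocallyPathConnectedSpace D := locallyPathConnectedSpace_of_completeSpace
  have hcurve (S : Set D) : ¬ IsSimpleClosedCurve S := fun hS ↦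
    hD_curve _ (Subtype.coe_image_subset D S) (hS.image .subtypeVal)
  obtain ⟨L, rfl⟩ : ∃ L : Set D, Subtype.val '' L = K :=
    subset_range_iff_exists_image_eq.1 (by rwa [Subtype.range_coe])
  have hL : IsCompact L := IsEmbedding.subtypeVal.isCompact_iff.2 (hD_compact.of_isClosed_subset
    hK hKD)
  have hL_conn : IsConnected L :=
    ⟨hK_conn.nonempty.of_image, IsInducing.subtypeVal.isPreconnected_image.1 hK_conn.isPreconnected⟩
  exact (hasFPP_of_mem_closure_connectedInterval_diff
    (fun _ _ ↦ mem_closure_connectedInterval_diff_singleton hcurve) hL hL_conn).of_homeomorph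
    (IsEmbedding.subtypeVal.homeomorphImage L)

theorem stmt_14_general (h : IsLocalDendrite X) : HasLFPP X := by
  have : LocallyConnectedSpace X := locallyConnectedSpace_of_forall_exists_mem_nhds fun x ↦
    let ⟨N, hN, _, _, _, hN_loc, _⟩ := h x
    ⟨N, hN, hN_loc⟩
  refine ⟨{B | IsOpen B ∧ HasFPP (closure B)}, ?_, fun B hB ↦ hB.2⟩
  refine TopologicalSpace.isTopologicalBasis_of_isOpen_of_nhds (fun B hB ↦ hB.1) fun x U hx hU ↦ ?_
  obtain ⟨N, hN, hN_closed, hN_dendrite⟩ := h x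
  obtain ⟨V, hVUN, hV, hxV, hV_conn⟩ := locallyConnectedSpace_iff_subsets_isOpen_isConnected.1 ‹_› x
    (U ∩ N) (inter_mem (hU.mem_nhds hx) hN)
  obtain ⟨hVU, hVN⟩ := subset_inter_iff.1 hVUN
  exact ⟨V, ⟨hV, hN_dendrite.hasFPP_of_isClosed_of_isConnected (closure_minimal hVN hN_closed)
    isClosed_closure hV_conn.closure⟩, hxV, hVU⟩

end LocalDendrites

/-- Every local dendrite (a metric continuum all of whose points have closed dendrite
neighborhoods) has the local fixed point property. -/
theorem stmt_14 {X : Type*} [MetricSpace X] [CompactSpace X] [ConnectedSpace X] [Nonempty X]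
    (h : IsLocalDendrite X) : HasLFPP X :=
  stmt_14_general h
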